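/- Completeness of subadditivity and monogamy for four regions: let s = (s_I) ∈ ℝ^{15} be a vector indexed by the nonempty subsets I ⊆ {1,2,3,4}. Extend s to subsets of {1,…,5} by setting ŝ(I) := s(I) if 5 ∉ I, ŝ(I) := s({1,…,5}∖I) if 5 ∈ I and I ≠ {1,…,5}, and ŝ(∅) := 0, ŝ({1,…,5}) := 0. Then s is the holographic entropy vector of some graph model on 4 regions if and only if for all pairwise disjoint nonempty subsets I, J, K ⊆ {1,…,5} one has the subadditivity inequality ŝ(I) + ŝ(J) ≥ ŝ(I∪J) and the monogamy-of-mutual-information inequality ŝ(I∪J) + ŝ(J∪K) + ŝ(I∪K) ≥ ŝ(I) + ŝ(J) + ŝ(K) + ŝ(I∪J∪K). -/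

import Mathlib

open Classical

/-- A *graph model* on `n` regions: a finite graph with symmetric nonnegative edge
weights `w` (weight `0` meaning "no edge") and a partial coloring of the vertices by
the `n+1` boundary colors; `color v = none` means `v` is a bulk vertex, color
`Fin.castSucc i` represents boundary region `i ∈ {1,…,n}` and color `Fin.last n`
represents the purifying region `n+1`. -/
structure GraphModel (n : ℕ) where
  V : Type
  [fintypeV : Fintype V]
  w : V → V → ℝ
  symm : ∀ u v, w u v = w v u
  nonneg : ∀ u v, 0 ≤ w u v
  color : V → Option (Fin (n + 1))

attribute [instance] GraphModel.fintypeV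

/-- `|C(W)|`: the total weight of the edges with exactly one endpoint in `W`
(each unordered crossing edge `{u,v}` is counted exactly once, via its ordering
with `u ∈ W` and `v ∉ W`). -/
noncomputable def GraphModel.cutWeight {n : ℕ} (G : GraphModel n) (W : Set G.V) : ℝ :=
  ∑ u : G.V, ∑ v : G.V, if u ∈ W ∧ v ∉ W then G.w u v else 0

/-- `W` is an `I`-cut: `W` contains precisely the boundary vertices whose color lies
in `I ⊆ {1,…,n}`. -/
def GraphModel.IsCut {n : ℕ} (G : GraphModel n) (I : Finset (Fin n)) (W : Set G.V) : Prop :=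
  ∀ v c, G.color v = some c → (v ∈ W ↔ ∃ i ∈ I, Fin.castSucc i = c)

/-- The discrete entropy `S*(I)`: the minimal weight of an `I`-cut. -/
noncomputable def GraphModel.entropy {n : ℕ} (G : GraphModel n) (I : Finset (Fin n)) : ℝ :=
  sInf (G.cutWeight '' {W | G.IsCut I W})

/-- The holographic entropy vector of a graph model: the collection of all discrete
entropies `S*(I)` of nonempty subsets `I ⊆ {1,…,n}`. -/
noncomputable def GraphModel.entropyVector {n : ℕ} (G : GraphModel n)
    (I : {I : Finset (Fin n) // I.Nonempty}) : ℝ :=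
  G.entropy I.1

/-- restriction of a subset of `{1,…,5}` not containing `5` to a subset of `{1,…,4}` -/
def down (I : Finset (Fin 5)) : Finset (Fin 4) :=
  Finset.univ.filter fun j => Fin.castSucc j ∈ I

/-- extension of `s` to possibly-empty index sets, with value `0` on `∅` -/
noncomputable def sbar (s : {I : Finset (Fin 4) // I.Nonempty} → ℝ)
    (J : Finset (Fin 4)) : ℝ :=
  if h : J.Nonempty then s ⟨J, h⟩ else 0

/-- the purified extension `ŝ` of `s` to subsets of `{1,…,5}`:
`ŝ(I) = s(I)` if `5 ∉ I`, `ŝ(I) = s({1,…,5}∖I)` if `5 ∈ I ≠ {1,…,5}`, and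
`ŝ(∅) = ŝ({1,…,5}) = 0`. -/
noncomputable def extend (s : {I : Finset (Fin 4) // I.Nonempty} → ℝ)
    (I : Finset (Fin 5)) : ℝ :=
  if I = Finset.univ then 0
  else if (4 : Fin 5) ∈ I then sbar s (down Iᶜ)
  else sbar s (down I)

/-!
Let `t` be a function on the sets of colors, with `t ∅ = 0` and `t Aᶜ = t A`.

For a graph model, subadditivity and monogamy are proved by contraction: a map between hypercubes
that does not increase Hamming distances turns minimal cuts for the larger side of the inequality
into cuts for the smaller side, and the total weight can only decrease, edge by edge.

Conversely, a single bulk vertex suffices. Join the boundary vertices `i` and `j` by an edge of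
weight `I(i:j) / 2`, where `I(i:j) = t {i} + t {j} - t {i, j} ≥ 0` by subadditivity, and give the
bulk vertex legs `L i` such that the edges at `i` have total weight `t {i}`. Leaving the bulk vertex
out of a cut for `A` costs the expansion `g A = ∑ t {i} - ∑ I(i:j)` over the points and the pairs
in `A`, so the entropy of `A` is `min (g A) (g Aᶜ)`. Here `g A = t A` if `A` has at most two
elements, and monogamy says `t A ≤ g A` if `A` has three. Of five colors, either `A` or `Aᶜ`
contains at most two, and then its expansion is the minimum.
-/

open Finset

section PairExpansion

variable {ι : Type*} [DecidableEq ι] (t : Finset ι → ℝ)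

/-- The mutual information `I(i:j)` of two points with respect to the entropies `t`. On the diagonal
the formula gives `I(i:i) = t {i}`. -/
def mutualInfo (i j : ι) : ℝ :=
  t {i} + t {j} - t {i, j}

/-- The inclusion–exclusion expansion of `t A` truncated after the pairs, i.e. the sum of the
entropies of the points of `A` minus the mutual informations of the unordered pairs in `A`. The
latter are encoded as half the sum over ordered pairs. -/
noncomputable def pairExpansion (A : Finset ι) : ℝ :=
  ∑ i ∈ A, (t {i} - (∑ j ∈ A.erase i, mutualInfo t i j) / 2)

lemma mutualInfo_comm (i j : ι) : mutualInfo t i j = mutualInfo t j i := by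
  rw [mutualInfo, mutualInfo, pair_comm, add_comm (t {i})]

variable {t}

lemma pairExpansion_pair {i j : ι} (hij : i ≠ j) : pairExpansion t {i, j} = t {i, j} := by
  have hi : ({i, j} : Finset ι).erase i = {j} := by grind
  have hj : ({i, j} : Finset ι).erase j = {i} := by grind
  rw [pairExpansion, sum_pair hij, hi, hj, sum_singleton, sum_singleton, mutualInfo_comm t j i,
    mutualInfo]
  ring

lemma pairExpansion_triple {i j k : ι} (hij : i ≠ j) (hik : i ≠ k) (hjk : j ≠ k) :
    pairExpansion t {i, j, k} = t {i, j} + t {j, k} + t {i, k} - t {i} - t {j} - t {k} := by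
  have hi : ({i, j, k} : Finset ι).erase i = {j, k} := by grind
  have hj : ({i, j, k} : Finset ι).erase j = {i, k} := by grind
  have hk : ({i, j, k} : Finset ι).erase k = {i, j} := by grind
  rw [pairExpansion, sum_insert (by simp [hij, hik]), sum_pair hjk, hi, hj, hk, sum_pair hjk,
    sum_pair hik, sum_pair hij, mutualInfo_comm t j i, mutualInfo_comm t k i,
    mutualInfo_comm t k j]
  simp only [mutualInfo]
  ring

lemma pairExpansion_of_card_le_two (ht : t ∅ = 0) {A : Finset ι} (hA : #A ≤ 2) :
    pairExpansion t A = t A := by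
  obtain h | h | h : #A = 0 ∨ #A = 1 ∨ #A = 2 := by lia
  · rw [card_eq_zero.1 h, ht, pairExpansion, sum_empty]
  · obtain ⟨i, rfl⟩ := card_eq_one.1 h
    simp [pairExpansion]
  · obtain ⟨i, j, hij, rfl⟩ := card_eq_two.1 h
    exact pairExpansion_pair hij

variable [Fintype ι]

variable (t) in
/-- The weight `t {i} - ½ ∑ I(i:j)` of the leg from the bulk vertex to `i` in the graph realizing
`t`: what remains of `t {i}` once `i` is joined to each `j ≠ i` by an edge of weight `½ I(i:j)`. -/
noncomputable def bulkWeight (i : ι) : ℝ :=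
  t {i} - (∑ j ∈ univ.erase i, mutualInfo t i j) / 2

lemma pairExpansion_eq_cross_add_sum_bulkWeight (A : Finset ι) :
    pairExpansion t A = ∑ i ∈ A, ∑ j ∈ Aᶜ, mutualInfo t i j / 2 + ∑ i ∈ A, bulkWeight t i := by
  rw [pairExpansion, ← sum_add_distrib]
  refine sum_congr rfl fun i hi => ?_
  rw [bulkWeight, sum_erase_eq_sub hi, sum_erase_eq_sub (mem_univ i), ← sum_add_sum_compl A,
    ← sum_div]
  ring

lemma pairExpansion_compl_eq_cross_add_sum_bulkWeight (A : Finset ι) :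
    pairExpansion t Aᶜ = ∑ i ∈ A, ∑ j ∈ Aᶜ, mutualInfo t i j / 2 + ∑ i ∈ Aᶜ, bulkWeight t i := by
  rw [pairExpansion_eq_cross_add_sum_bulkWeight, compl_compl, sum_comm]
  simp only [mutualInfo_comm t]

end PairExpansion

/-- The properties of the entropies of a graph model, as a function of the set of boundary colors
including the purifying one: invariance under complements, subadditivity and monogamy of mutual
information. -/
structure IsMonogamous {ι : Type*} [Fintype ι] [DecidableEq ι] (t : Finset ι → ℝ) : Prop where
  empty : t ∅ = 0
  compl (A : Finset ι) : t Aᶜ = t A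
  union_le (A B : Finset ι) : A.Nonempty → B.Nonempty → Disjoint A B → t (A ∪ B) ≤ t A + t B
  monogamy (A B C : Finset ι) : A.Nonempty → B.Nonempty → C.Nonempty →
    Disjoint A B → Disjoint B C → Disjoint A C →
    t A + t B + t C + t (A ∪ B ∪ C) ≤ t (A ∪ B) + t (B ∪ C) + t (A ∪ C)

namespace IsMonogamous

variable {ι : Type*} [Fintype ι] [DecidableEq ι] {t : Finset ι → ℝ}

lemma nonneg (ht : IsMonogamous t) (A : Finset ι) : 0 ≤ t A := by
  rcases A.eq_empty_or_nonempty with rfl | hA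
  · exact ht.empty.ge
  rcases Aᶜ.eq_empty_or_nonempty with hA' | hA'
  · rw [← ht.compl, hA', ht.empty]
  have h : 0 ≤ t A + t Aᶜ := calc
    0 = t (A ∪ Aᶜ) := by rw [union_compl, ← compl_empty, ht.compl, ht.empty]
    _ ≤ t A + t Aᶜ := ht.union_le A Aᶜ hA hA' disjoint_compl_right
  linarith [ht.compl A]

lemma mutualInfo_nonneg (ht : IsMonogamous t) (i j : ι) : 0 ≤ mutualInfo t i j := by
  rcases eq_or_ne i j with rfl | hij
  · simpa [mutualInfo] using ht.nonneg {i}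
  · exact sub_nonneg.2 (ht.union_le {i} {j} (singleton_nonempty i) (singleton_nonempty j)
      (disjoint_singleton.2 hij))

lemma le_pairExpansion_triple (ht : IsMonogamous t) {i j k : ι} (hij : i ≠ j) (hik : i ≠ k)
    (hjk : j ≠ k) : t {i, j, k} ≤ pairExpansion t {i, j, k} := by
  have h : t {i} + t {j} + t {k} + t ({i, j} ∪ {k}) ≤ t {i, j} + t {j, k} + t {i, k} :=
    ht.monogamy {i} {j} {k} (singleton_nonempty i) (singleton_nonempty j) (singleton_nonempty k)
      (disjoint_singleton.2 hij) (disjoint_singleton.2 hjk) (disjoint_singleton.2 hik)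
  rw [insert_union, ← insert_eq] at h
  rw [pairExpansion_triple hij hik hjk]
  linarith

section CardFive

variable (hι : Fintype.card ι = 5)

include hι

lemma two_mul_bulkWeight_add_le (ht : IsMonogamous t) {i j : ι} (hij : i ≠ j) :
    2 * (bulkWeight t i + bulkWeight t j) ≤ ∑ k, bulkWeight t k := by
  have hcard : #({i, j}ᶜ : Finset ι) = 3 := by rw [card_compl, card_pair hij, hι]
  obtain ⟨k, l, m, hkl, hkm, hlm, hc⟩ := card_eq_three.1 hcard
  have h : pairExpansion t {i, j} ≤ pairExpansion t {i, j}ᶜ := calc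
    pairExpansion t {i, j} = t {i, j}ᶜ := by rw [pairExpansion_pair hij, ht.compl]
    _ ≤ pairExpansion t {i, j}ᶜ := hc ▸ ht.le_pairExpansion_triple hkl hkm hlm
  rw [pairExpansion_eq_cross_add_sum_bulkWeight,
    pairExpansion_compl_eq_cross_add_sum_bulkWeight, add_le_add_iff_left, sum_pair hij] at h
  rw [← sum_add_sum_compl {i, j}, sum_pair hij]
  linarith

lemma bulkWeight_nonneg (ht : IsMonogamous t) (i : ι) : 0 ≤ bulkWeight t i := by
  have hcard : #({i}ᶜ : Finset ι) = 4 := by rw [card_compl, card_singleton, hι]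
  obtain ⟨j, B, hj, hB, hB3⟩ := card_eq_succ.1 hcard
  obtain ⟨k, l, m, hkl, hkm, hlm, rfl⟩ := card_eq_three.1 hB3
  have hsum : ∑ v, bulkWeight t v = bulkWeight t i +
      (bulkWeight t j + (bulkWeight t k + (bulkWeight t l + bulkWeight t m))) := by
    rw [← sum_add_sum_compl {i}, ← hB, sum_singleton, sum_insert hj,
      sum_insert (by simp [hkl, hkm]), sum_pair hlm]
  have hjk : j ≠ k := fun h => hj (by simp [h])
  linarith [ht.two_mul_bulkWeight_add_le hι hjk, ht.two_mul_bulkWeight_add_le hι hlm]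

lemma two_mul_sum_bulkWeight_le (ht : IsMonogamous t) {A : Finset ι} (hA : #A ≤ 2) :
    2 * ∑ i ∈ A, bulkWeight t i ≤ ∑ i, bulkWeight t i := by
  obtain ⟨B, hAB, -, hB⟩ := exists_subsuperset_card_eq (subset_univ A) hA (by simp [hι])
  obtain ⟨i, j, hij, rfl⟩ := card_eq_two.1 hB
  calc
    2 * ∑ v ∈ A, bulkWeight t v ≤ 2 * ∑ v ∈ {i, j}, bulkWeight t v := by
      gcongr
      exact fun v _ _ => ht.bulkWeight_nonneg hι v
    _ ≤ ∑ v, bulkWeight t v := by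
      rw [sum_pair hij]
      exact ht.two_mul_bulkWeight_add_le hι hij

lemma min_pairExpansion_of_card_le_two (ht : IsMonogamous t) {A : Finset ι} (hA : #A ≤ 2) :
    min (pairExpansion t A) (pairExpansion t Aᶜ) = t A := by
  rw [min_eq_left, pairExpansion_of_card_le_two ht.empty hA]
  rw [pairExpansion_eq_cross_add_sum_bulkWeight,
    pairExpansion_compl_eq_cross_add_sum_bulkWeight, add_le_add_iff_left]
  linarith [ht.two_mul_sum_bulkWeight_le hι hA, sum_add_sum_compl A (bulkWeight t)]

lemma min_pairExpansion (ht : IsMonogamous t) (A : Finset ι) :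
    min (pairExpansion t A) (pairExpansion t Aᶜ) = t A := by
  have hcard : #A + #Aᶜ = 5 := by rw [card_add_card_compl, hι]
  obtain hA | hA : #A ≤ 2 ∨ #Aᶜ ≤ 2 := by lia
  · exact ht.min_pairExpansion_of_card_le_two hι hA
  · rw [min_comm, ← ht.compl]
    simpa only [compl_compl] using ht.min_pairExpansion_of_card_le_two hι hA

end CardFive

end IsMonogamous

namespace GraphModel

variable {n : ℕ} (G : GraphModel n)

/-- `W` contains precisely the boundary vertices whose color lies in the set `I` of colors. Unlike
in `IsCut`, the set `I` may contain the purifying color. -/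
def IsColorCut (I : Finset (Fin (n + 1))) (W : Set G.V) : Prop :=
  ∀ v c, G.color v = some c → (v ∈ W ↔ c ∈ I)

/-- The discrete entropy of a set of colors that may contain the purifying one. -/
noncomputable def colorEntropy (I : Finset (Fin (n + 1))) : ℝ :=
  sInf (G.cutWeight '' {W | G.IsColorCut I W})

lemma entropy_eq_colorEntropy_map (I : Finset (Fin n)) :
    G.entropy I = G.colorEntropy (I.map Fin.castSuccEmb) := by
  simp [entropy, colorEntropy, IsCut, IsColorCut]

lemma cutWeight_nonneg (W : Set G.V) : 0 ≤ G.cutWeight W :=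
  sum_nonneg fun u _ => sum_nonneg fun v _ => ite_nonneg (G.nonneg u v) le_rfl

lemma cutWeight_compl (W : Set G.V) : G.cutWeight Wᶜ = G.cutWeight W := by
  rw [cutWeight, sum_comm]
  refine sum_congr rfl fun u _ => sum_congr rfl fun v _ => ?_
  simp only [G.symm v u, Set.mem_compl_iff, not_not, and_comm]

lemma two_mul_cutWeight (W : Set G.V) :
    2 * G.cutWeight W = ∑ u, ∑ v, if (u ∈ W) ≠ (v ∈ W) then G.w u v else 0 := by
  rw [two_mul]
  nth_rewrite 2 [← cutWeight_compl]
  simp only [cutWeight, ← sum_add_distrib]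
  refine sum_congr rfl fun u _ => sum_congr rfl fun v _ => ?_
  by_cases hu : u ∈ W <;> by_cases hv : v ∈ W <;> simp [hu, hv]

variable {G} in
lemma colorEntropy_le_cutWeight {I : Finset (Fin (n + 1))} {W : Set G.V} (hW : G.IsColorCut I W) :
    G.colorEntropy I ≤ G.cutWeight W :=
  csInf_le ⟨0, Set.forall_mem_image.2 fun U _ => G.cutWeight_nonneg U⟩ ⟨W, hW, rfl⟩

lemma exists_cutWeight_eq_colorEntropy (I : Finset (Fin (n + 1))) :
    ∃ W, G.IsColorCut I W ∧ G.cutWeight W = G.colorEntropy I := by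
  have hne : (G.cutWeight '' {W | G.IsColorCut I W}).Nonempty :=
    ⟨_, {v | ∃ c ∈ I, G.color v = some c}, fun v c hc => by simp [hc], rfl⟩
  exact hne.csInf_mem (Set.toFinite _)

lemma colorEntropy_empty : G.colorEntropy ∅ = 0 := by
  obtain ⟨W, -, hW⟩ := G.exists_cutWeight_eq_colorEntropy ∅
  have hcut : G.IsColorCut ∅ ∅ := fun v c _ => by simp
  refine le_antisymm ?_ (hW ▸ G.cutWeight_nonneg W)
  simpa [cutWeight] using colorEntropy_le_cutWeight hcut

lemma colorEntropy_compl_le (I : Finset (Fin (n + 1))) : G.colorEntropy Iᶜ ≤ G.colorEntropy I := by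
  obtain ⟨W, hcut, hW⟩ := G.exists_cutWeight_eq_colorEntropy I
  rw [← hW, ← cutWeight_compl]
  exact colorEntropy_le_cutWeight fun v c hc => by simp [hcut v c hc]

lemma colorEntropy_compl (I : Finset (Fin (n + 1))) : G.colorEntropy Iᶜ = G.colorEntropy I :=
  (G.colorEntropy_compl_le I).antisymm (by simpa using G.colorEntropy_compl_le Iᶜ)

section Contraction

variable {κ μ : Type*} [Fintype κ] [Fintype μ]

lemma two_mul_sum_cutWeight (x : G.V → κ → Bool) :
    2 * ∑ k, G.cutWeight {v | x v k} = ∑ u, ∑ v, G.w u v * hammingDist (x u) (x v) := by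
  simp only [mul_sum, two_mul_cutWeight]
  rw [sum_comm]
  refine sum_congr rfl fun u _ => ?_
  rw [sum_comm]
  refine sum_congr rfl fun v _ => ?_
  rw [mul_comm, hammingDist, ← nsmul_eq_mul, ← sum_const, sum_filter]
  simp

theorem sum_colorEntropy_le_of_hammingDist_le (A : κ → Finset (Fin (n + 1)))
    (B : μ → Finset (Fin (n + 1))) (f : (κ → Bool) → μ → Bool)
    (hf : ∀ x y, hammingDist (f x) (f y) ≤ hammingDist x y)
    (hAB : ∀ c x, (∀ k, x k ↔ c ∈ A k) → ∀ m, f x m ↔ c ∈ B m) :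
    ∑ m, G.colorEntropy (B m) ≤ ∑ k, G.colorEntropy (A k) := by
  choose W hcut hW using fun k => G.exists_cutWeight_eq_colorEntropy (A k)
  let x : G.V → κ → Bool := fun v k => decide (v ∈ W k)
  have hcut' : ∀ m, G.IsColorCut (B m) {v | f (x v) m} := fun m v c hc =>
    hAB c (x v) (fun k => by simp [x, hcut k v c hc]) m
  have hx : ∀ k, G.colorEntropy (A k) = G.cutWeight {v | x v k} := fun k => by simp [x, hW]
  have hle : 2 * ∑ m, G.cutWeight {v | f (x v) m} ≤ 2 * ∑ k, G.cutWeight {v | x v k} := by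
    rw [G.two_mul_sum_cutWeight fun v => f (x v), two_mul_sum_cutWeight]
    gcongr with u _ v _
    · exact G.nonneg u v
    · exact hf (x u) (x v)
  calc
    ∑ m, G.colorEntropy (B m) ≤ ∑ m, G.cutWeight {v | f (x v) m} :=
      sum_le_sum fun m _ => colorEntropy_le_cutWeight (hcut' m)
    _ ≤ ∑ k, G.cutWeight {v | x v k} := by linarith
    _ = ∑ k, G.colorEntropy (A k) := sum_congr rfl fun k _ => (hx k).symm

lemma colorEntropy_union_le (I J : Finset (Fin (n + 1))) :
    G.colorEntropy (I ∪ J) ≤ G.colorEntropy I + G.colorEntropy J := by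
  have h := G.sum_colorEntropy_le_of_hammingDist_le ![I, J] ![I ∪ J] (fun x => ![x 0 || x 1])
    (by decide) fun c x hx m => by fin_cases m; simp [hx]
  simpa [Fin.sum_univ_succ] using h

lemma colorEntropy_monogamy {I J K : Finset (Fin (n + 1))} (hIJ : Disjoint I J)
    (hJK : Disjoint J K) (hIK : Disjoint I K) :
    G.colorEntropy I + G.colorEntropy J + G.colorEntropy K + G.colorEntropy (I ∪ J ∪ K) ≤
      G.colorEntropy (I ∪ J) + G.colorEntropy (J ∪ K) + G.colorEntropy (I ∪ K) := by
  -- The map sends the patterns `101`, `110`, `011` of colors in `I`, `J`, `K` to the forced values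
  -- `1001`, `0101`, `0011`, the pattern `000` to `0000`, and the remaining ones to `0001`.
  have h := G.sum_colorEntropy_le_of_hammingDist_le ![I ∪ J, J ∪ K, I ∪ K] ![I, J, K, I ∪ J ∪ K]
    (fun x => ![x 0 && x 2 && !x 1, x 0 && x 1 && !x 2, x 1 && x 2 && !x 0, x 0 || x 1 || x 2])
    (by decide) fun c x hx m => by
      have h₀ : x 0 ↔ c ∈ I ∪ J := hx 0
      have h₁ : x 1 ↔ c ∈ J ∪ K := hx 1
      have h₂ : x 2 ↔ c ∈ I ∪ K := hx 2
      rw [Finset.disjoint_left] at hIJ hJK hIK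
      fin_cases m <;> simp only [Fin.zero_eta, Fin.mk_one, Fin.reduceFinMk, Matrix.cons_val] <;>
        grind
  simpa [Fin.sum_univ_succ, add_assoc] using h

end Contraction

lemma isMonogamous_colorEntropy : IsMonogamous G.colorEntropy where
  empty := G.colorEntropy_empty
  compl := G.colorEntropy_compl
  union_le I J _ _ _ := G.colorEntropy_union_le I J
  monogamy _ _ _ _ _ _ hIJ hJK hIK := G.colorEntropy_monogamy hIJ hJK hIK

section OneBulk

/-- The graph model with one boundary vertex `some i` of each color `i` and a single bulk vertex
`none`, where the boundary vertices `i` and `j` are joined with weight `b i j`, and the bulk vertex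
is joined to `i` with weight `a i`. -/
def oneBulk (b : Fin (n + 1) → Fin (n + 1) → ℝ) (b_symm : ∀ i j, b i j = b j i)
    (b_nonneg : ∀ i j, 0 ≤ b i j) (a : Fin (n + 1) → ℝ) (a_nonneg : ∀ i, 0 ≤ a i) :
    GraphModel n where
  V := Option (Fin (n + 1))
  w
    | some i, some j => b i j
    | some i, none => a i
    | none, some j => a j
    | none, none => 0
  symm := by rintro (_ | i) (_ | j) <;> simp [b_symm]
  nonneg := by rintro (_ | i) (_ | j) <;> simp [b_nonneg, a_nonneg]
  color := id

variable {b : Fin (n + 1) → Fin (n + 1) → ℝ} (b_symm : ∀ i j, b i j = b j i)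
  (b_nonneg : ∀ i j, 0 ≤ b i j) {a : Fin (n + 1) → ℝ} (a_nonneg : ∀ i, 0 ≤ a i)
  (I : Finset (Fin (n + 1)))

lemma cutWeight_oneBulk {W : Set (Option (Fin (n + 1)))} (hW : ∀ i, some i ∈ W ↔ i ∈ I) :
    (oneBulk b b_symm b_nonneg a a_nonneg).cutWeight W =
      (∑ i ∈ I, ∑ j ∈ Iᶜ, b i j) + if none ∈ W then ∑ i ∈ Iᶜ, a i else ∑ i ∈ I, a i := by
  change (∑ u : Option (Fin (n + 1)), ∑ v, if u ∈ W ∧ v ∉ W then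
    (oneBulk b b_symm b_nonneg a a_nonneg).w u v else 0) = _
  simp only [Fintype.sum_option, oneBulk, hW, ← mem_compl, ite_and, sum_add_distrib]
  by_cases hbulk : none ∈ W <;> simp [hbulk, add_comm, -mem_compl]

lemma colorEntropy_oneBulk :
    (oneBulk b b_symm b_nonneg a a_nonneg).colorEntropy I =
      (∑ i ∈ I, ∑ j ∈ Iᶜ, b i j) + min (∑ i ∈ I, a i) (∑ i ∈ Iᶜ, a i) := by
  set G := oneBulk b b_symm b_nonneg a a_nonneg
  have hcut : ∀ W : Set (Option (Fin (n + 1))), G.IsColorCut I W ↔ ∀ i, some i ∈ W ↔ i ∈ I :=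
    fun W => ⟨fun h i => h (some i) i rfl, by rintro h _ i rfl; exact h i⟩
  refine le_antisymm ?_ ?_
  · rw [← min_add_add_left, le_min_iff]
    constructor
    · have hW : ∀ i, some i ∈ some '' (I : Set (Fin (n + 1))) ↔ i ∈ I := by simp
      simpa [G, cutWeight_oneBulk b_symm b_nonneg a_nonneg I hW] using
        colorEntropy_le_cutWeight ((hcut _).2 hW)
    · have hW : ∀ i, some i ∈ insert none (some '' (I : Set (Fin (n + 1)))) ↔ i ∈ I := by simp
      simpa [G, cutWeight_oneBulk b_symm b_nonneg a_nonneg I hW] using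
        colorEntropy_le_cutWeight ((hcut _).2 hW)
  · obtain ⟨W, hW, h⟩ := G.exists_cutWeight_eq_colorEntropy I
    rw [← h, cutWeight_oneBulk b_symm b_nonneg a_nonneg I ((hcut W).1 hW)]
    gcongr
    split_ifs
    exacts [min_le_right _ _, min_le_left _ _]

end OneBulk

theorem exists_colorEntropy_eq_min_pairExpansion {t : Finset (Fin (n + 1)) → ℝ}
    (hI : ∀ i j, 0 ≤ mutualInfo t i j) (hL : ∀ i, 0 ≤ bulkWeight t i) :
    ∃ G : GraphModel n, ∀ A,
      G.colorEntropy A = min (pairExpansion t A) (pairExpansion t Aᶜ) := by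
  refine ⟨oneBulk (fun i j => mutualInfo t i j / 2) (fun i j => by rw [mutualInfo_comm])
    (fun i j => div_nonneg (hI i j) zero_le_two) (bulkWeight t) hL, fun A => ?_⟩
  rw [colorEntropy_oneBulk, pairExpansion_eq_cross_add_sum_bulkWeight,
    pairExpansion_compl_eq_cross_add_sum_bulkWeight, min_add_add_left]

theorem exists_colorEntropy_eq_iff_isMonogamous {t : Finset (Fin 5) → ℝ} :
    (∃ G : GraphModel 4, G.colorEntropy = t) ↔ IsMonogamous t := by
  refine ⟨by rintro ⟨G, rfl⟩; exact G.isMonogamous_colorEntropy, fun ht => ?_⟩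
  have hcard : Fintype.card (Fin 5) = 5 := Fintype.card_fin 5
  obtain ⟨G, hG⟩ := exists_colorEntropy_eq_min_pairExpansion ht.mutualInfo_nonneg
    (ht.bulkWeight_nonneg hcard)
  exact ⟨G, funext fun A => (hG A).trans (ht.min_pairExpansion hcard A)⟩

end GraphModel

section extend

variable (s : {I : Finset (Fin 4) // I.Nonempty} → ℝ)

lemma extend_empty : extend s ∅ = 0 := by
  have h : (∅ : Finset (Fin 5)) ≠ univ := by decide
  simp [extend, h, sbar, down]

lemma extend_compl (I : Finset (Fin 5)) : extend s Iᶜ = extend s I := by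
  rcases eq_or_ne I univ with rfl | h
  · rw [compl_univ, extend_empty]
    simp [extend]
  rcases eq_or_ne I ∅ with rfl | h'
  · rw [compl_empty, extend_empty]
    simp [extend]
  by_cases h4 : (4 : Fin 5) ∈ I <;> simp [extend, h, h', h4, compl_eq_univ_iff]

lemma extend_map (I : {I : Finset (Fin 4) // I.Nonempty}) :
    extend s (I.1.map Fin.castSuccEmb) = s I := by
  have h4 : (4 : Fin 5) ∉ I.1.map Fin.castSuccEmb := by
    simp only [mem_map, Fin.coe_castSuccEmb, not_exists, not_and]
    exact fun i _ => (Fin.castSucc_lt_last i).ne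
  have hne : I.1.map Fin.castSuccEmb ≠ univ := fun h => h4 (h ▸ mem_univ _)
  have hdown : down (I.1.map Fin.castSuccEmb) = I.1 := by
    ext j
    simp [down]
  rw [extend, if_neg hne, if_neg h4, hdown, sbar, dif_pos I.2]

lemma map_down {I : Finset (Fin 5)} (h4 : (4 : Fin 5) ∉ I) :
    (down I).map Fin.castSuccEmb = I := by
  revert I
  decide

variable {s}

lemma eq_extend_of_compl {t : Finset (Fin 5) → ℝ} (t_empty : t ∅ = 0) (t_compl : ∀ I, t Iᶜ = t I)
    (hts : ∀ I : {I : Finset (Fin 4) // I.Nonempty}, t (I.1.map Fin.castSuccEmb) = s I) :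
    t = extend s := by
  have key : ∀ I : Finset (Fin 5), (4 : Fin 5) ∉ I → t I = extend s I := fun I h4 => by
    rw [← map_down h4]
    rcases (down I).eq_empty_or_nonempty with h | h
    · rw [h, map_empty, t_empty, extend_empty]
    · rw [hts ⟨down I, h⟩, extend_map s ⟨down I, h⟩]
  funext I
  by_cases h4 : (4 : Fin 5) ∈ I
  · rw [← t_compl, ← extend_compl, key Iᶜ (by simpa using h4)]
  · exact key I h4

lemma GraphModel.entropyVector_eq_iff (G : GraphModel 4) :
    G.entropyVector = s ↔ G.colorEntropy = extend s := by
  constructor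
  · rintro rfl
    exact eq_extend_of_compl G.colorEntropy_empty G.colorEntropy_compl fun I =>
      (G.entropy_eq_colorEntropy_map I.1).symm
  · intro h
    funext I
    rw [entropyVector, entropy_eq_colorEntropy_map, h, extend_map]

end extend

/-- Completeness of subadditivity and monogamy for four regions:
`s` is the holographic entropy vector of some graph model on 4 regions iff the
purified extension `ŝ` satisfies subadditivity for all disjoint nonempty
`I, J ⊆ {1,…,5}` and monogamy of mutual information for all pairwise disjoint
nonempty `I, J, K ⊆ {1,…,5}`. -/
theorem stmt7 (s : {I : Finset (Fin 4) // I.Nonempty} → ℝ) :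
    (∃ G : GraphModel 4, G.entropyVector = s) ↔
      ((∀ I J : Finset (Fin 5), I.Nonempty → J.Nonempty → Disjoint I J →
          extend s I + extend s J ≥ extend s (I ∪ J)) ∧
        (∀ I J K : Finset (Fin 5), I.Nonempty → J.Nonempty → K.Nonempty →
          Disjoint I J → Disjoint J K → Disjoint I K →
          extend s (I ∪ J) + extend s (J ∪ K) + extend s (I ∪ K) ≥
            extend s I + extend s J + extend s K + extend s (I ∪ J ∪ K))) := by
  simp only [GraphModel.entropyVector_eq_iff, GraphModel.exists_colorEntropy_eq_iff_isMonogamous]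
  exact ⟨fun h => ⟨h.union_le, h.monogamy⟩,
    fun ⟨hSA, hMMI⟩ => ⟨extend_empty s, extend_compl s, hSA, hMMI⟩⟩
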